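/- Let k ∈ {0,1}. Let u ∈ C²([0,T]; ℓ²(ℤ^d)) solve the inhomogeneous linear wave equation ∂_t² u − Δu = F on ℤ^d × [0,T] with u(·,0) = f and ∂_t u(·,0) = g, where f, g ∈ ℓ^{2,k}(ℤ^d) and F ∈ L¹([0,T]; ℓ^{2,k}(ℤ^d)). Then there is a constant C (depending only on d and k) such that for all t ∈ [0,T]: ‖u(·,t)‖_{ℓ^{2,k}} + ‖∂_t u(·,t)‖_{ℓ^{2,k}} ≤ C(1+|t|^{k+1})[ ‖f‖_{ℓ^{2,k}} + ‖g‖_{ℓ^{2,k}} + ∫_0^t ‖F(·,s)‖_{ℓ^{2,k}} ds ]. -/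

import Mathlib

/-!
The proof is the energy method in the real Hilbert space `ℓ²(ℤ^d)`.

For `k = 0`, summation by parts (`inner_lapOp`) shows that the energy
`E = ‖∂ₜu‖² + ∑ⱼ ‖Dⱼu‖²` satisfies `E' = 2⟨F, ∂ₜu⟩`, so `√E` grows at most by `∫‖F‖`
(`energy_bound`). This bounds `∂ₜu` and the differences `Dⱼu` without growth in `t`, and
integrating `∂ₜu` bounds `u` with one factor `1 + t` (`wave_bound`).

For `k = 1`, the same estimate is applied to `w u`, where `w(x) = sin(ε xⱼ)/ε`. This weight is
bounded, so `w u` is again a `C²` curve in `ℓ²` although `⟨x⟩u` is not known to be. It satisfies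
the wave equation with source `wF + [w, Δ]u`. The commutator involves only first differences of
`u` and `(Δw)u`; since `w` is `1`-Lipschitz with `|Δw| ≤ ε`, its norm is at most
`2‖Dⱼu‖ + ε‖u‖` (`norm_commutator_le`), which for `ε(1 + t) ≤ 1` is bounded uniformly in time by
the data. Hence `w ∂ₜu` grows like `1 + t` and `w u` like `(1 + t)²`, uniformly in `ε`
(`weighted_bound`). Letting `ε → 0` gives the bound for the weights `xⱼ`, and
`⟨x⟩² = 1 + ∑ⱼ xⱼ²` concludes (`w2_one_le`).
-/

open scoped BigOperators ENNReal NNReal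
open MeasureTheory Filter

noncomputable section

/-- Kernel `φⱼ` of the discrete partial derivative on `ℤ^d`:
`φⱼ(m) = -4i/(π(4a²-1))` if `m = a·eⱼ`, and `0` otherwise. -/
def phi (d : ℕ) (j : Fin d) (m : Fin d → ℤ) : ℂ :=
  if ∀ i, i ≠ j → m i = 0 then
    (-4 * Complex.I) / ((Real.pi : ℂ) * (4 * (m j : ℂ) ^ 2 - 1))
  else 0

/-- Discrete convolution on `ℤ^d`. -/
def dconv {d : ℕ} (u v : (Fin d → ℤ) → ℂ) (k : Fin d → ℤ) : ℂ :=
  ∑' m, u m * v (k - m)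

/-- Discrete partial derivative `∂ⱼ u = u ∗ φⱼ`. -/
def pd {d : ℕ} (j : Fin d) (u : (Fin d → ℤ) → ℂ) : (Fin d → ℤ) → ℂ :=
  dconv u (phi d j)

/-- Japanese bracket `⟨m⟩ = (1+|m|²)^{1/2}`. -/
def jap {d : ℕ} (m : Fin d → ℤ) : ℝ :=
  Real.sqrt (1 + ∑ i, ((m i : ℝ)) ^ 2)

open scoped Classical in
/-- `ℓ^p` norm on `ℤ^d` (valued in `ℝ≥0∞`), `1 ≤ p ≤ ∞`. -/
def lpn {d : ℕ} (p : ℝ≥0∞) (f : (Fin d → ℤ) → ℂ) : ℝ≥0∞ :=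
  if p = ⊤ then ⨆ m, (‖f m‖₊ : ℝ≥0∞)
  else (∑' m, (‖f m‖₊ : ℝ≥0∞) ^ p.toReal) ^ (1 / p.toReal)

/-- Weighted `ℓ^{2,k}` norm: the `ℓ²` norm of `m ↦ ⟨m⟩^k f(m)`. -/
def w2 {d : ℕ} (k : ℕ) (f : (Fin d → ℤ) → ℂ) : ℝ≥0∞ :=
  lpn 2 (fun m => ((jap m ^ k : ℝ) : ℂ) * f m)

/-- Discrete Laplacian on `ℤ^d`. -/
def lap {d : ℕ} (u : (Fin d → ℤ) → ℂ) (x : Fin d → ℤ) : ℂ :=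
  ∑ j, (u (x + Pi.single j 1) + u (x - Pi.single j 1) - 2 * u x)

/-- Continuity of a curve `t ↦ f(·,t)` into `ℓ^{2,k}(ℤ^d)` on a set `S` of times. -/
def ContW {d : ℕ} (k : ℕ) (S : Set ℝ) (f : ℝ → (Fin d → ℤ) → ℂ) : Prop :=
  ∀ t ∈ S, Tendsto (fun s => w2 k (fun m => f s m - f t m))
    (nhdsWithin t S) (nhds (0 : ℝ≥0∞))

/-- `f'` is the derivative (in the `ℓ^{2,k}(ℤ^d)` norm) of the curve `t ↦ f(·,t)` on `S`. -/
def DerivW {d : ℕ} (k : ℕ) (S : Set ℝ) (f f' : ℝ → (Fin d → ℤ) → ℂ) : Prop :=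
  ∀ t ∈ S, Tendsto
    (fun s => w2 k (fun m => (s - t)⁻¹ • (f s m - f t m) - f' t m))
    (nhdsWithin t (S \ {t})) (nhds (0 : ℝ≥0∞))

/-- `u ∈ C²(S; ℓ^{2,k}(ℤ^d))`, with first and second time derivatives `u1`, `u2`. -/
structure IsC2 {d : ℕ} (k : ℕ) (S : Set ℝ) (u u1 u2 : ℝ → (Fin d → ℤ) → ℂ) : Prop where
  mem0 : ∀ t ∈ S, w2 k (u t) < ⊤
  mem1 : ∀ t ∈ S, w2 k (u1 t) < ⊤
  mem2 : ∀ t ∈ S, w2 k (u2 t) < ⊤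
  cont0 : ContW k S u
  cont1 : ContW k S u1
  cont2 : ContW k S u2
  hder1 : DerivW k S u u1
  hder2 : DerivW k S u1 u2

/-! ### The Hilbert space `ℓ²(ℤ^d)` and its operators -/

/-- `ℓ²(ℤ^d; ℂ)`, always used as a *real* Hilbert space. -/
abbrev L2 (d : ℕ) : Type := lp (fun _ : Fin d → ℤ => ℂ) 2

section Norms

variable {d : ℕ}

lemma lpn_two (f : (Fin d → ℤ) → ℂ) :
    lpn 2 f = (∑' m, ENNReal.ofReal (‖f m‖ ^ 2)) ^ (1 / 2 : ℝ) := by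
  have h : (2 : ℝ≥0∞) ≠ ⊤ := by simp
  simp only [lpn, if_neg h, ENNReal.toReal_ofNat]
  congr 1
  refine tsum_congr fun m => ?_
  rw [ENNReal.ofReal_pow (norm_nonneg _), ofReal_norm, ENNReal.rpow_two]
  rfl

lemma norm_sq_hasSum (h : L2 d) : HasSum (fun x => ‖h x‖ ^ 2) (‖h‖ ^ 2) := by
  simpa using lp.hasSum_norm (p := 2) (by simp) h

lemma memℓp_two_iff {f : (Fin d → ℤ) → ℂ} :
    Memℓp f 2 ↔ Summable fun x => ‖f x‖ ^ 2 := by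
  simpa using memℓp_gen_iff (p := 2) (f := f) (by simp)

lemma lpn_coe (h : L2 d) : lpn 2 (h : (Fin d → ℤ) → ℂ) = ENNReal.ofReal ‖h‖ := by
  rw [lpn_two, ← ENNReal.ofReal_tsum_of_nonneg (fun _ => by positivity) (norm_sq_hasSum h).summable,
    (norm_sq_hasSum h).tsum_eq, ENNReal.ofReal_rpow_of_nonneg (by positivity) (by norm_num),
    ← Real.sqrt_eq_rpow, Real.sqrt_sq (norm_nonneg _)]

lemma memℓp_of_lpn {f : (Fin d → ℤ) → ℂ} (h : lpn 2 f < ⊤) : Memℓp f 2 := by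
  rw [lpn_two] at h
  have h2 : ∑' m, ENNReal.ofReal (‖f m‖ ^ 2) ≠ ⊤ := by
    intro h'
    rw [h'] at h
    simp at h
  rw [memℓp_two_iff]
  have := ENNReal.summable_toReal h2
  refine this.congr fun x => ?_
  rw [ENNReal.toReal_ofReal (by positivity)]

lemma lpn_mono {f g : (Fin d → ℤ) → ℂ} (h : ∀ x, ‖f x‖ ≤ ‖g x‖) : lpn 2 f ≤ lpn 2 g := by
  rw [lpn_two, lpn_two]
  gcongr with x
  exact h x

lemma lpn_le_of_sum {f : (Fin d → ℤ) → ℂ} {Y : ℝ} (hY : 0 ≤ Y)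
    (h : ∀ s : Finset (Fin d → ℤ), ∑ x ∈ s, ‖f x‖ ^ 2 ≤ Y ^ 2) :
    lpn 2 f ≤ ENNReal.ofReal Y := by
  have hm : Memℓp f 2 := memℓp_gen' (C := Y ^ 2) (by simpa using h)
  have := lp.norm_le_of_forall_sum_le (p := 2) (by simp) hY (f := (⟨f, hm⟩ : L2 d))
    (by simpa using h)
  exact (lpn_coe (⟨f, hm⟩ : L2 d)).trans_le (ENNReal.ofReal_le_ofReal this)

lemma w2_zero (f : (Fin d → ℤ) → ℂ) : w2 0 f = lpn 2 f := by
  simp [w2]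

lemma one_le_jap (x : Fin d → ℤ) : 1 ≤ jap x := by
  rw [jap, Real.one_le_sqrt]
  have : 0 ≤ ∑ i, ((x i : ℝ)) ^ 2 := Finset.sum_nonneg fun _ _ => by positivity
  linarith

lemma abs_le_jap (x : Fin d → ℤ) (j : Fin d) : |(x j : ℝ)| ≤ jap x := by
  rw [jap]
  apply Real.abs_le_sqrt
  have := Finset.single_le_sum (f := fun i => ((x i : ℝ)) ^ 2) (fun _ _ => by positivity)
    (Finset.mem_univ j)
  linarith

lemma w2_zero_le (k : ℕ) (f : (Fin d → ℤ) → ℂ) : w2 0 f ≤ w2 k f := by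
  rw [w2_zero, w2]
  refine lpn_mono fun x => ?_
  have : 1 ≤ jap x ^ k := one_le_pow₀ (one_le_jap x)
  rw [norm_mul, Complex.norm_real, Real.norm_of_nonneg (by linarith)]
  nlinarith [norm_nonneg (f x)]

lemma sqnorm_le {h k : L2 d} {M : ℝ} (hM : 0 ≤ M) (hk : ∀ x, ‖k x‖ ≤ M * ‖h x‖) :
    ‖k‖ ≤ M * ‖h‖ := by
  refine lp.norm_le_of_forall_sum_le (p := 2) (by simp) (by positivity) fun s => ?_
  have h1 := sum_le_hasSum s (fun _ _ => by positivity) (norm_sq_hasSum h)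
  have h2 : ∑ x ∈ s, ‖k x‖ ^ 2 ≤ ∑ x ∈ s, M ^ 2 * ‖h x‖ ^ 2 := by
    refine Finset.sum_le_sum fun x _ => ?_
    rw [← mul_pow]
    gcongr
    exact hk x
  rw [← Finset.mul_sum] at h2
  have : ∑ x ∈ s, ‖k x‖ ^ 2 ≤ (M * ‖h‖) ^ 2 := by
    rw [mul_pow]; exact h2.trans (by gcongr)
  simpa using this

end Norms

section Operators

variable {d : ℕ}

lemma hasSum_shift (v : Fin d → ℤ) (h : L2 d) :
    HasSum (fun x => ‖h (x + v)‖ ^ 2) (‖h‖ ^ 2) :=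
  ((Equiv.addRight v).hasSum_iff (f := fun x => ‖h x‖ ^ 2)).2 (norm_sq_hasSum h)

/-- Translation `(τ_v h)(x) = h(x + v)`, a linear isometry of `ℓ²`. -/
def shift (v : Fin d → ℤ) : L2 d →ₗᵢ[ℝ] L2 d where
  toFun h := ⟨fun x => h (x + v), memℓp_two_iff.2 (hasSum_shift v h).summable⟩
  map_add' a b := by ext x; rfl
  map_smul' c a := by ext x; rfl
  norm_map' h := by
    refine (sq_eq_sq₀ (norm_nonneg _) (norm_nonneg _)).1 ?_
    exact (norm_sq_hasSum (⟨fun x => h (x + v), memℓp_two_iff.2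
      (hasSum_shift v h).summable⟩ : L2 d)).unique (hasSum_shift v h)

@[simp] lemma shift_apply (v : Fin d → ℤ) (h : L2 d) (x : Fin d → ℤ) :
    shift v h x = h (x + v) := rfl

/-- Forward difference in direction `j`. -/
def diffOp (j : Fin d) : L2 d →L[ℝ] L2 d :=
  (shift (Pi.single j 1)).toContinuousLinearMap - ContinuousLinearMap.id ℝ (L2 d)

lemma diffOp_eq (j : Fin d) (h : L2 d) : diffOp j h = shift (Pi.single j 1) h - h := rfl

lemma norm_diffOp_le (j : Fin d) (h : L2 d) : ‖diffOp j h‖ ≤ 2 * ‖h‖ := by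
  rw [diffOp_eq]
  refine (norm_sub_le _ _).trans ?_
  rw [LinearIsometry.norm_map]; linarith

/-- The discrete Laplacian as a bounded operator on `ℓ²`. -/
def lapOp : L2 d →L[ℝ] L2 d :=
  ∑ j, ((shift (Pi.single j 1)).toContinuousLinearMap +
    (shift (-Pi.single j 1)).toContinuousLinearMap - (2 : ℝ) • ContinuousLinearMap.id ℝ (L2 d))

lemma lapOp_eq (h : L2 d) : lapOp h =
    ∑ j, (shift (Pi.single j 1) h + shift (-Pi.single j 1) h - (2 : ℝ) • h) := by
  simp only [lapOp, sum_apply]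
  rfl

lemma lapOp_apply (h : L2 d) (x : Fin d → ℤ) : lapOp h x = lap h x := by
  rw [lapOp_eq, lp.coeFn_sum, Finset.sum_apply]
  refine Finset.sum_congr rfl fun j _ => ?_
  change h (x + Pi.single j 1) + h (x + -Pi.single j 1) - (2 : ℝ) • h x = _
  simp [sub_eq_add_neg]

lemma inner_shift_neg (v : Fin d → ℤ) (a b : L2 d) :
    inner ℝ (shift (-v) a) b = inner ℝ a (shift v b) := by
  rw [← LinearIsometry.inner_map_map (shift v)]
  congr 1
  ext x
  simp

/-- Summation by parts: `-Δ` is the operator of the Dirichlet form `∑ⱼ ⟨Dⱼ a, Dⱼ b⟩`. -/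
lemma inner_lapOp (a b : L2 d) :
    inner ℝ (lapOp a) b = -∑ j, inner ℝ (diffOp j a) (diffOp j b) := by
  rw [lapOp_eq, sum_inner, ← Finset.sum_neg_distrib]
  refine Finset.sum_congr rfl fun j _ => ?_
  rw [diffOp_eq, diffOp_eq, inner_sub_left, inner_add_left, inner_shift_neg, inner_smul_left,
    inner_sub_left, inner_sub_right, inner_sub_right, LinearIsometry.inner_map_map]
  simp only [conj_trivial]
  ring

/-- Multiplication by a bounded real weight. -/
def mulOp (w : (Fin d → ℤ) → ℝ) (M : ℝ) (hM : 0 ≤ M) (hw : ∀ x, |w x| ≤ M) :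
    L2 d →L[ℝ] L2 d :=
  have key (h : L2 d) (x : Fin d → ℤ) : ‖(w x : ℝ) • h x‖ ≤ M * ‖h x‖ := by
    rw [norm_smul]; exact mul_le_mul_of_nonneg_right (hw x) (norm_nonneg _)
  have mem (h : L2 d) : Memℓp (fun x => w x • h x) 2 := by
    rw [memℓp_two_iff]
    refine ((norm_sq_hasSum h).summable.mul_left (M ^ 2)).of_nonneg_of_le
      (fun _ => by positivity) fun x => ?_
    rw [← mul_pow]
    exact pow_le_pow_left₀ (norm_nonneg _) (key h x) 2
  LinearMap.mkContinuous
    { toFun := fun h => ⟨fun x => w x • h x, mem h⟩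
      map_add' := fun a b => by ext x; exact smul_add _ _ _
      map_smul' := fun c a => by ext x; exact smul_comm (w x) c (a x) } M
    fun h => sqnorm_le hM (key h)

lemma mulOp_apply (w : (Fin d → ℤ) → ℝ) (M : ℝ) (hM : 0 ≤ M) (hw : ∀ x, |w x| ≤ M)
    (h : L2 d) (x : Fin d → ℤ) : mulOp w M hM hw h x = w x • h x := rfl

lemma norm_mulOp_le (w : (Fin d → ℤ) → ℝ) (M : ℝ) (hM : 0 ≤ M) (hw : ∀ x, |w x| ≤ M)
    (h : L2 d) : ‖mulOp w M hM hw h‖ ≤ M * ‖h‖ :=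
  sqnorm_le hM fun x => by
    rw [mulOp_apply, norm_smul]; exact mul_le_mul_of_nonneg_right (hw x) (norm_nonneg _)

end Operators

/-! ### Energy estimates -/

/-- Energy inequality in a real Hilbert space: `√E` grows at most at the rate `‖G‖`, where
`E = ‖V'‖² + ∑ⱼ ‖Dⱼ V‖²`. -/
lemma energy_bound {H ι : Type*} [NormedAddCommGroup H] [InnerProductSpace ℝ H] [Fintype ι]
    (D : ι → H →L[ℝ] H) {T : ℝ} {V V1 V2 G : ℝ → H}
    (hV : ∀ t ∈ Set.Icc 0 T, HasDerivWithinAt V (V1 t) (Set.Icc 0 T) t)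
    (hV1 : ∀ t ∈ Set.Icc 0 T, HasDerivWithinAt V1 (V2 t) (Set.Icc 0 T) t)
    (hG : ContinuousOn G (Set.Icc 0 T))
    (heq : ∀ t ∈ Set.Icc 0 T, inner ℝ (V2 t) (V1 t) =
      -∑ j, inner ℝ (D j (V t)) (D j (V1 t)) + inner ℝ (G t) (V1 t))
    {t : ℝ} (ht : t ∈ Set.Icc 0 T) :
    √(‖V1 t‖ ^ 2 + ∑ j, ‖D j (V t)‖ ^ 2) ≤
      √(‖V1 0‖ ^ 2 + ∑ j, ‖D j (V 0)‖ ^ 2) + ∫ s in (0 : ℝ)..t, ‖G s‖ := by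
  have hT : 0 ≤ T := ht.1.trans ht.2
  set E : ℝ → ℝ := fun t => ‖V1 t‖ ^ 2 + ∑ j, ‖D j (V t)‖ ^ 2 with hE
  have hE0 : ∀ t, 0 ≤ E t := fun t => by positivity
  have hcV : ContinuousOn V (Set.Icc 0 T) := fun t ht => (hV t ht).continuousWithinAt
  have hcV1 : ContinuousOn V1 (Set.Icc 0 T) := fun t ht => (hV1 t ht).continuousWithinAt
  have hcE : ContinuousOn E (Set.Icc 0 T) := by
    refine (hcV1.norm.pow 2).add (continuousOn_finsetSum _ fun j _ => ?_)
    exact ((D j).continuous.comp_continuousOn hcV).norm.pow 2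
  have hIntG : IntervalIntegrable (fun s => ‖G s‖) volume 0 T :=
    ContinuousOn.intervalIntegrable (by rw [Set.uIcc_of_le hT]; exact hG.norm)
  have hcI : ContinuousOn (fun t => ∫ s in (0 : ℝ)..t, ‖G s‖) (Set.Icc 0 T) := by
    have := intervalIntegral.continuousOn_primitive_interval' (μ := volume) hIntG
      Set.left_mem_uIcc
    rwa [Set.uIcc_of_le hT] at this
  have hEd : ∀ t ∈ Set.Ioo 0 T, HasDerivAt E (2 * inner ℝ (G t) (V1 t)) t := by
    intro t ht
    have hn := Icc_mem_nhds ht.1 ht.2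
    have hm := Set.Ioo_subset_Icc_self ht
    have h1 := ((hV1 t hm).hasDerivAt hn).norm_sq
    have h2 : HasDerivAt (fun t => ∑ j, ‖D j (V t)‖ ^ 2)
        (∑ j, 2 * inner ℝ (D j (V t)) (D j (V1 t))) t := by
      refine HasDerivAt.fun_sum fun j _ => ?_
      exact (((D j).hasFDerivAt.comp_hasDerivAt t ((hV t hm).hasDerivAt hn))).norm_sq
    refine (h1.add h2).congr_deriv ?_
    rw [real_inner_comm, heq t hm, ← Finset.mul_sum]
    ring
  -- regularise the square root by `δ > 0`, since `E` may vanish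
  have key : ∀ δ > 0, √(E t + δ) ≤ √(E 0 + δ) + ∫ s in (0 : ℝ)..t, ‖G s‖ := by
    intro δ hδ
    have hanti : AntitoneOn (fun t => √(E t + δ) - ∫ s in (0 : ℝ)..t, ‖G s‖) (Set.Icc 0 T) := by
      have hd : ∀ t ∈ interior (Set.Icc 0 T), HasDerivAt
          (fun t => √(E t + δ) - ∫ s in (0 : ℝ)..t, ‖G s‖)
          (2 * inner ℝ (G t) (V1 t) / (2 * √(E t + δ)) - ‖G t‖) t := by
        intro t ht
        rw [interior_Icc] at ht
        have hn := Icc_mem_nhds ht.1 ht.2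
        have hpos : E t + δ ≠ 0 := by have := hE0 t; positivity
        refine (((hEd t ht).add_const δ).sqrt hpos).sub ?_
        refine intervalIntegral.integral_hasDerivAt_right
          (hIntG.mono_set ?_) ?_ (hG.norm.continuousAt hn)
        · rw [Set.uIcc_of_le hT, Set.uIcc_of_le ht.1.le]
          exact Set.Icc_subset_Icc_right ht.2.le
        · exact ContinuousOn.stronglyMeasurableAtFilter isOpen_Ioo
            (hG.norm.mono Set.Ioo_subset_Icc_self) t ht
      refine antitoneOn_of_deriv_nonpos (convex_Icc 0 T) ?_
        (fun t ht => (hd t ht).differentiableAt.differentiableWithinAt) ?_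
      · exact (hcE.add continuousOn_const).sqrt.sub hcI
      · intro t ht
        rw [(hd t ht).deriv]
        have hs : 0 < √(E t + δ) := Real.sqrt_pos.2 (by have := hE0 t; positivity)
        have hV1s : ‖V1 t‖ ≤ √(E t + δ) := by
          apply Real.le_sqrt_of_sq_le
          have : 0 ≤ ∑ j, ‖D j (V t)‖ ^ 2 := by positivity
          simp only [hE]; linarith
        have h1 : inner ℝ (G t) (V1 t) ≤ ‖G t‖ * √(E t + δ) :=
          (real_inner_le_norm _ _).trans (by gcongr)
        rw [mul_div_mul_left _ _ two_ne_zero, sub_nonpos, div_le_iff₀ hs]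
        exact h1
    have := hanti (Set.left_mem_Icc.2 hT) ht ht.1
    simp only [intervalIntegral.integral_same, sub_zero] at this
    linarith
  have hlim (a : ℝ) : Tendsto (fun δ => √(a + δ)) (nhdsWithin 0 (Set.Ioi 0)) (nhds √a) := by
    have : Continuous fun δ : ℝ => √(a + δ) := by fun_prop
    simpa using (this.tendsto 0).mono_left nhdsWithin_le_nhds
  exact le_of_tendsto_of_tendsto (hlim (E t)) ((hlim (E 0)).add_const _)
    (eventually_nhdsWithin_of_forall fun δ hδ => key δ hδ)

/-- Unweighted estimate on `[0, T]`: `∂ₜV` and the differences of `V` are bounded by the data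
without growth in `T`; only `‖V‖` picks up a factor `1 + T`. -/
lemma wave_bound {d : ℕ} {T B : ℝ} {V V1 V2 G : ℝ → L2 d} (hT : 0 ≤ T)
    (hV : ∀ t ∈ Set.Icc 0 T, HasDerivWithinAt V (V1 t) (Set.Icc 0 T) t)
    (hV1 : ∀ t ∈ Set.Icc 0 T, HasDerivWithinAt V1 (V2 t) (Set.Icc 0 T) t)
    (hG : ContinuousOn G (Set.Icc 0 T))
    (heq : ∀ t ∈ Set.Icc 0 T, V2 t = lapOp (V t) + G t)
    (hB : ‖V 0‖ + ‖V1 0‖ + ∫ s in (0 : ℝ)..T, ‖G s‖ ≤ B)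
    {t : ℝ} (ht : t ∈ Set.Icc 0 T) :
    ‖V1 t‖ ≤ (2 * d + 1) * B ∧ (∀ j, ‖diffOp j (V t)‖ ≤ (2 * d + 1) * B) ∧
      ‖V t‖ ≤ (2 * d + 1) * B * (1 + T) := by
  have hI0 : 0 ≤ ∫ s in (0 : ℝ)..T, ‖G s‖ :=
    intervalIntegral.integral_nonneg hT fun _ _ => norm_nonneg _
  have hd0 : (0 : ℝ) ≤ d := by positivity
  have hE : ∀ t ∈ Set.Icc 0 T,
      √(‖V1 t‖ ^ 2 + ∑ j, ‖diffOp j (V t)‖ ^ 2) ≤ (2 * d + 1) * B := by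
    intro t ht
    refine (energy_bound diffOp hV hV1 hG (fun t ht => ?_) ht).trans ?_
    · rw [heq t ht, inner_add_left, inner_lapOp]
    have hIntG : IntervalIntegrable (fun s => ‖G s‖) volume 0 T :=
      ContinuousOn.intervalIntegrable (by rw [Set.uIcc_of_le hT]; exact hG.norm)
    have h1 : ∫ s in (0 : ℝ)..t, ‖G s‖ ≤ ∫ s in (0 : ℝ)..T, ‖G s‖ :=
      intervalIntegral.integral_mono_interval le_rfl ht.1 ht.2
        (Eventually.of_forall fun _ => norm_nonneg _) hIntG
    have h2 : √(‖V1 0‖ ^ 2 + ∑ j, ‖diffOp j (V 0)‖ ^ 2) ≤ ‖V1 0‖ + 2 * d * ‖V 0‖ := by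
      rw [Real.sqrt_le_left (by positivity)]
      have : ∑ j, ‖diffOp j (V 0)‖ ^ 2 ≤ ∑ j : Fin d, (2 * ‖V 0‖) ^ 2 :=
        Finset.sum_le_sum fun j _ =>
          pow_le_pow_left₀ (norm_nonneg _) (norm_diffOp_le j (V 0)) 2
      simp only [Finset.sum_const, Finset.card_univ, Fintype.card_fin, nsmul_eq_mul] at this
      have hdd : (d : ℝ) ≤ d ^ 2 := by exact_mod_cast Nat.le_self_pow two_ne_zero d
      have h3 : (d : ℝ) * (2 * ‖V 0‖) ^ 2 ≤ d ^ 2 * (2 * ‖V 0‖) ^ 2 := by gcongr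
      have h4 : 0 ≤ ‖V1 0‖ * (2 * d * ‖V 0‖) := by positivity
      nlinarith
    have h5 : (2 * d + 1) * (‖V 0‖ + ‖V1 0‖ + ∫ s in (0 : ℝ)..T, ‖G s‖) ≤ (2 * d + 1) * B := by
      gcongr
    have h6 := mul_nonneg hd0 (norm_nonneg (V1 0))
    have h7 := mul_nonneg hd0 hI0
    have h8 := norm_nonneg (V 0)
    nlinarith
  have hv1 : ∀ t ∈ Set.Icc 0 T, ‖V1 t‖ ≤ (2 * d + 1) * B := fun t ht =>
    (Real.le_sqrt_of_sq_le (by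
      have : 0 ≤ ∑ j, ‖diffOp j (V t)‖ ^ 2 := by positivity
      linarith)).trans (hE t ht)
  refine ⟨hv1 t ht, fun j => (Real.le_sqrt_of_sq_le ?_).trans (hE t ht), ?_⟩
  · have := Finset.single_le_sum (f := fun j => ‖diffOp j (V t)‖ ^ 2)
      (fun _ _ => by positivity) (Finset.mem_univ j)
    have := sq_nonneg ‖V1 t‖
    linarith
  · have h1 := Convex.norm_image_sub_le_of_norm_hasDerivWithin_le hV hv1 (convex_Icc 0 T)
      (Set.left_mem_Icc.2 hT) ht
    rw [sub_zero, Real.norm_of_nonneg ht.1] at h1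
    have h2 : ‖V t‖ ≤ ‖V t - V 0‖ + ‖V 0‖ := by simpa using norm_add_le (V t - V 0) (V 0)
    have hB0 : ‖V 0‖ ≤ B := by have := norm_nonneg (V1 0); linarith
    have hB0' : 0 ≤ B := (norm_nonneg _).trans hB0
    have h3 : (2 * d + 1) * B * t ≤ (2 * d + 1) * B * T := by
      have := ht.2; gcongr
    have h4 := mul_nonneg hd0 hB0'
    nlinarith

/-! ### The bounded weights `sin(ε xⱼ)/ε` -/

section Weights

variable {d : ℕ}

/-- The bounded approximation `sin(ε xⱼ)/ε` of the coordinate `xⱼ`; it is almost harmonic,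
its discrete Laplacian being `O(ε)`. -/
def sinW (j : Fin d) (ε : ℝ) (x : Fin d → ℤ) : ℝ := Real.sin (ε * x j) / ε

lemma sinW_le (j : Fin d) {ε : ℝ} (hε : 0 < ε) (x : Fin d → ℤ) : |sinW j ε x| ≤ ε⁻¹ := by
  rw [sinW, abs_div, abs_of_pos hε, div_eq_mul_inv]
  exact mul_le_of_le_one_left (by positivity) (Real.abs_sin_le_one _)

lemma sinW_le_coord (j : Fin d) {ε : ℝ} (hε : 0 < ε) (x : Fin d → ℤ) :
    |sinW j ε x| ≤ |(x j : ℝ)| := by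
  rw [sinW, abs_div, abs_of_pos hε, div_le_iff₀ hε]
  have := Real.abs_sin_le_abs (x := ε * x j)
  rw [abs_mul, abs_of_pos hε] at this
  linarith

lemma sinW_lip (j : Fin d) {ε : ℝ} (hε : 0 < ε) (x y : Fin d → ℤ)
    (hxy : |(y j : ℝ) - x j| ≤ 1) : |sinW j ε y - sinW j ε x| ≤ 1 := by
  rw [sinW, sinW, ← sub_div, abs_div, abs_of_pos hε, div_le_one hε]
  refine (Real.abs_sin_sub_sin_le _ _).trans ?_
  rw [← mul_sub, abs_mul, abs_of_pos hε]
  exact mul_le_of_le_one_right hε.le hxy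

lemma sinW_lap (j : Fin d) {ε : ℝ} (hε : 0 < ε) (x : Fin d → ℤ) :
    |sinW j ε (x + Pi.single j 1) + sinW j ε (x - Pi.single j 1) - 2 * sinW j ε x| ≤ ε := by
  have h : sinW j ε (x + Pi.single j 1) + sinW j ε (x - Pi.single j 1) - 2 * sinW j ε x =
      2 * (Real.cos ε - 1) * sinW j ε x := by
    simp only [sinW, Pi.add_apply, Pi.sub_apply, Pi.single_eq_same, Int.cast_add, Int.cast_sub,
      Int.cast_one, mul_add, mul_sub, mul_one, Real.sin_add, Real.sin_sub]
    field_simp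
    ring
  have hc : |2 * (Real.cos ε - 1)| ≤ ε ^ 2 := by
    rw [abs_le]
    constructor <;> nlinarith [Real.one_sub_sq_div_two_le_cos (x := ε), Real.cos_le_one ε]
  rw [h, abs_mul]
  calc _ ≤ ε ^ 2 * ε⁻¹ := mul_le_mul hc (sinW_le j hε x) (abs_nonneg _) (by positivity)
    _ = ε := by field_simp

lemma tendsto_sinW (j : Fin d) (x : Fin d → ℤ) :
    Tendsto (fun ε => sinW j ε x) (nhdsWithin 0 (Set.Ioi 0)) (nhds (x j : ℝ)) := by
  have h : HasDerivAt (fun ε : ℝ => Real.sin (ε * x j)) (x j : ℝ) 0 := by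
    simpa using ((hasDerivAt_id (0 : ℝ)).mul_const (x j : ℝ)).sin
  rw [hasDerivAt_iff_tendsto_slope] at h
  refine (h.mono_left (nhdsWithin_mono _ fun y hy => (ne_of_gt hy : y ≠ 0))).congr fun ε => ?_
  simp [slope_def_field, sinW]

/-- Multiplication by `sinW j ε`. -/
def sinOp (j : Fin d) {ε : ℝ} (hε : 0 < ε) : L2 d →L[ℝ] L2 d :=
  mulOp (sinW j ε) ε⁻¹ (by positivity) (sinW_le j hε)

lemma lpn_sinOp_le (j : Fin d) {ε : ℝ} (hε : 0 < ε) (h : L2 d) :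
    lpn 2 (sinOp j hε h : (Fin d → ℤ) → ℂ) ≤ w2 1 h := by
  refine lpn_mono fun x => ?_
  rw [sinOp, mulOp_apply, norm_smul, norm_mul, Complex.norm_real, pow_one]
  gcongr
  rw [Real.norm_eq_abs, Real.norm_eq_abs]
  exact ((sinW_le_coord j hε x).trans (abs_le_jap x j)).trans (le_abs_self _)

/-- The commutator of the weight with `Δ` is controlled by one difference of `h`, up to an
`O(ε)` error; bounding it by `‖h‖` instead would cost one power of `t`. -/
lemma norm_commutator_le (j : Fin d) {ε : ℝ} (hε : 0 < ε) (h : L2 d) :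
    ‖sinOp j hε (lapOp h) - lapOp (sinOp j hε h)‖ ≤ 2 * ‖diffOp j h‖ + ε * ‖h‖ := by
  set w := sinW j ε with hw
  set e : Fin d → ℤ := Pi.single j 1 with he
  have hp : ∀ x, |w (x + e) - w x| ≤ 1 := fun x => sinW_lip j hε _ _ (by simp [he])
  have hq : ∀ x, |w (x - e) - w x| ≤ 1 := fun x => sinW_lip j hε _ _ (by simp [he])
  have hr : ∀ x, |w (x + e) + w (x - e) - 2 * w x| ≤ ε := sinW_lap j hε
  have key : sinOp j hε (lapOp h) - lapOp (sinOp j hε h) =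
      mulOp _ 1 zero_le_one hq (shift (-e) (diffOp j h)) - mulOp _ 1 zero_le_one hp (diffOp j h)
        - mulOp _ ε hε.le hr h := by
    ext x
    change w x • lapOp h x - lapOp (sinOp j hε h) x =
      (w (x - e) - w x) • (h (x + -e + e) - h (x + -e)) - (w (x + e) - w x) • (h (x + e) - h x)
        - (w (x + e) + w (x - e) - 2 * w x) • h x
    rw [lapOp_apply, lapOp_apply, lap, lap, Finset.smul_sum, ← Finset.sum_sub_distrib,
      Finset.sum_eq_single j]
    · change w x • (h (x + e) + h (x - e) - 2 * h x) -
        (w (x + e) • h (x + e) + w (x - e) • h (x - e) - 2 * (w x • h x)) = _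
      rw [neg_add_cancel_right, ← sub_eq_add_neg]
      simp only [Complex.real_smul]
      push_cast
      ring
    · intro i _ hij
      have h1 : w (x + Pi.single i 1) = w x := by simp [hw, sinW, hij.symm]
      have h2 : w (x - Pi.single i 1) = w x := by simp [hw, sinW, hij.symm]
      change w x • (h (x + Pi.single i 1) + h (x - Pi.single i 1) - 2 * h x) -
        (w (x + Pi.single i 1) • h (x + Pi.single i 1) +
          w (x - Pi.single i 1) • h (x - Pi.single i 1) - 2 * (w x • h x)) = 0
      rw [h1, h2]
      simp only [Complex.real_smul]
      ring
    · simp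
  rw [key]
  have n1 := norm_mulOp_le _ 1 zero_le_one hq (shift (-e) (diffOp j h))
  have n2 := norm_mulOp_le _ 1 zero_le_one hp (diffOp j h)
  have n3 := norm_mulOp_le _ ε hε.le hr h
  rw [LinearIsometry.norm_map] at n1
  refine (norm_sub_le _ _).trans ((add_le_add_left (norm_sub_le _ _) _).trans ?_)
  linarith

/-- Estimate for `sin(ε xⱼ)/ε · V`, uniform in `ε`, obtained by applying `wave_bound` to it with
the commutator as an additional source. -/
lemma weighted_bound {T A ε : ℝ} {V V1 V2 G : ℝ → L2 d} (hT : 0 ≤ T)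
    (j : Fin d) (hε : 0 < ε) (hεT : ε * (1 + T) ≤ 1)
    (hV : ∀ t ∈ Set.Icc 0 T, HasDerivWithinAt V (V1 t) (Set.Icc 0 T) t)
    (hV1 : ∀ t ∈ Set.Icc 0 T, HasDerivWithinAt V1 (V2 t) (Set.Icc 0 T) t)
    (hG : ContinuousOn G (Set.Icc 0 T))
    (heq : ∀ t ∈ Set.Icc 0 T, V2 t = lapOp (V t) + G t)
    (hA : ‖V 0‖ + ‖V1 0‖ + ∫ s in (0 : ℝ)..T, ‖G s‖ ≤ A)
    (hA' : ‖sinOp j hε (V 0)‖ + ‖sinOp j hε (V1 0)‖ +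
      ∫ s in (0 : ℝ)..T, ‖sinOp j hε (G s)‖ ≤ A)
    {t : ℝ} (ht : t ∈ Set.Icc 0 T) :
    ‖sinOp j hε (V1 t)‖ ≤ (2 * d + 1) * (A * (1 + 3 * (2 * d + 1) * T)) ∧
      ‖sinOp j hε (V t)‖ ≤ (2 * d + 1) * (A * (1 + 3 * (2 * d + 1) * T)) * (1 + T) := by
  set W : L2 d →L[ℝ] L2 d := sinOp j hε with hW
  set c : ℝ := 2 * d + 1 with hc
  have hc0 : 0 < c := by positivity
  have hcV : ContinuousOn V (Set.Icc 0 T) := fun t ht => (hV t ht).continuousWithinAt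
  have hA0 : 0 ≤ A := by
    have : 0 ≤ ∫ s in (0 : ℝ)..T, ‖G s‖ :=
      intervalIntegral.integral_nonneg hT fun _ _ => norm_nonneg _
    have := norm_nonneg (V 0)
    have := norm_nonneg (V1 0)
    linarith
  have hcWG : ContinuousOn (fun t => W (G t)) (Set.Icc 0 T) := W.continuous.comp_continuousOn hG
  have hcG' : ContinuousOn (fun t => W (G t) + (W (lapOp (V t)) - lapOp (W (V t))))
      (Set.Icc 0 T) := by
    refine hcWG.add (ContinuousOn.sub ?_ ?_)
    · exact (W.continuous.comp lapOp.continuous).comp_continuousOn hcV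
    · exact (lapOp.continuous.comp W.continuous).comp_continuousOn hcV
  have hcomm : ∀ s ∈ Set.Icc 0 T, ‖W (lapOp (V s)) - lapOp (W (V s))‖ ≤ 3 * c * A := by
    intro s hs
    obtain ⟨-, h1, h2⟩ := wave_bound hT hV hV1 hG heq hA hs
    have h3 : ε * ‖V s‖ ≤ ε * (c * A * (1 + T)) := by gcongr
    have h4 : c * A * (ε * (1 + T)) ≤ c * A * 1 := by gcongr
    have := norm_commutator_le j hε (V s)
    have := h1 j
    rw [← hc] at this
    nlinarith
  refine (wave_bound (V := fun t => W (V t)) (V1 := fun t => W (V1 t)) (V2 := fun t => W (V2 t))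
    (G := fun t => W (G t) + (W (lapOp (V t)) - lapOp (W (V t)))) hT
    (fun t ht => W.hasFDerivAt.comp_hasDerivWithinAt t (hV t ht))
    (fun t ht => W.hasFDerivAt.comp_hasDerivWithinAt t (hV1 t ht)) hcG'
    (fun t ht => ?_) ?_ ht).imp id And.right
  · simp only [heq t ht, map_add]
    abel
  · have hle : ∫ s in (0 : ℝ)..T, ‖W (G s) + (W (lapOp (V s)) - lapOp (W (V s)))‖ ≤
        ∫ s in (0 : ℝ)..T, (‖W (G s)‖ + 3 * c * A) := by
      refine intervalIntegral.integral_mono_on hT ?_ ?_ fun s hs =>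
        (norm_add_le _ _).trans (by gcongr; exact hcomm s hs)
      · exact ContinuousOn.intervalIntegrable (by rw [Set.uIcc_of_le hT]; exact hcG'.norm)
      · exact ContinuousOn.intervalIntegrable
          (by rw [Set.uIcc_of_le hT]; exact hcWG.norm.add continuousOn_const)
    rw [intervalIntegral.integral_add
      (ContinuousOn.intervalIntegrable (by rw [Set.uIcc_of_le hT]; exact hcWG.norm))
      intervalIntegrable_const, intervalIntegral.integral_const, smul_eq_mul, sub_zero] at hle
    nlinarith

/-- Letting `ε → 0` in finite partial sums turns the uniform bounds for `sinOp` into bounds for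
the coordinate weights, which suffice because `⟨x⟩² = 1 + ∑ⱼ xⱼ²`. -/
lemma w2_one_le (h : L2 d) {Y ε₀ : ℝ} (hY : 0 ≤ Y) (hε₀ : 0 < ε₀)
    (H : ∀ j, ∀ ε (hε : 0 < ε), ε ≤ ε₀ → ‖sinOp j hε h‖ ≤ Y) :
    w2 1 h ≤ ENNReal.ofReal (‖h‖ + d * Y) := by
  refine lpn_le_of_sum (by positivity) fun s => ?_
  have h1 : ∑ x ∈ s, ‖h x‖ ^ 2 ≤ ‖h‖ ^ 2 :=
    sum_le_hasSum s (fun _ _ => by positivity) (norm_sq_hasSum h)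
  have h2 : ∀ j, ∑ x ∈ s, ((x j : ℝ)) ^ 2 * ‖h x‖ ^ 2 ≤ Y ^ 2 := by
    intro j
    refine le_of_tendsto (f := fun ε => ∑ x ∈ s, (sinW j ε x) ^ 2 * ‖h x‖ ^ 2)
      (tendsto_finsetSum s fun x _ => ((tendsto_sinW j x).pow 2).mul_const _) ?_
    filter_upwards [Ioc_mem_nhdsGT hε₀] with ε hε
    refine le_trans ?_ (pow_le_pow_left₀ (norm_nonneg _) (H j ε hε.1 hε.2) 2)
    refine le_trans (le_of_eq ?_)
      (sum_le_hasSum s (fun _ _ => by positivity) (norm_sq_hasSum (sinOp j hε.1 h)))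
    refine Finset.sum_congr rfl fun x _ => ?_
    rw [sinOp, mulOp_apply, norm_smul, mul_pow, Real.norm_eq_abs, sq_abs]
  have h3 : ∑ x ∈ s, ‖((jap x ^ 1 : ℝ) : ℂ) * h x‖ ^ 2 =
      ∑ x ∈ s, ‖h x‖ ^ 2 + ∑ j, ∑ x ∈ s, ((x j : ℝ)) ^ 2 * ‖h x‖ ^ 2 := by
    rw [Finset.sum_comm, ← Finset.sum_add_distrib]
    refine Finset.sum_congr rfl fun x _ => ?_
    rw [pow_one, norm_mul, mul_pow, Complex.norm_real, Real.norm_eq_abs, sq_abs, jap,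
      Real.sq_sqrt (by positivity), add_mul, one_mul, Finset.sum_mul]
  have h4 : ∑ j : Fin d, ∑ x ∈ s, ((x j : ℝ)) ^ 2 * ‖h x‖ ^ 2 ≤ d * Y ^ 2 := by
    refine (Finset.sum_le_sum fun j _ => h2 j).trans ?_
    simp
  have hdd : (d : ℝ) ≤ d ^ 2 := by exact_mod_cast Nat.le_self_pow two_ne_zero d
  have h5 : (d : ℝ) * Y ^ 2 ≤ d ^ 2 * Y ^ 2 := by gcongr
  have h6 : 0 ≤ ‖h‖ * (d * Y) := by positivity
  rw [h3]
  nlinarith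

end Weights

/-! ### Curves in `ℓ²` -/

section Curves

variable {d : ℕ}

open scoped Classical in
/-- The element of `ℓ²` with underlying function `f`, and `0` when `f` is not square summable. -/
def toL2 (f : (Fin d → ℤ) → ℂ) : L2 d := if h : Memℓp f 2 then ⟨f, h⟩ else 0

lemma coe_toL2 {f : (Fin d → ℤ) → ℂ} (h : w2 0 f < ⊤) : (toL2 f : (Fin d → ℤ) → ℂ) = f := by
  rw [w2_zero] at h
  rw [toL2, dif_pos (memℓp_of_lpn h)]

lemma tendsto_of_lpn {α : Type*} {l : Filter α} {a : α → L2 d}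
    (h : Tendsto (fun s => lpn 2 (a s : (Fin d → ℤ) → ℂ)) l (nhds 0)) : Tendsto a l (nhds 0) := by
  rw [tendsto_zero_iff_norm_tendsto_zero]
  have := (ENNReal.tendsto_toReal ENNReal.zero_ne_top).comp h
  refine this.congr fun s => ?_
  simp [lpn_coe]

lemma continuousOn_toL2 {S : Set ℝ} {u : ℝ → (Fin d → ℤ) → ℂ} (hm : ∀ t ∈ S, w2 0 (u t) < ⊤)
    (hc : ContW 0 S u) : ContinuousOn (fun t => toL2 (u t)) S := by
  intro t ht
  have : Tendsto (fun s => toL2 (u s) - toL2 (u t)) (nhdsWithin t S) (nhds 0) := by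
    refine tendsto_of_lpn ((hc t ht).congr' ?_)
    filter_upwards [self_mem_nhdsWithin] with s hs
    rw [w2_zero, lp.coeFn_sub, coe_toL2 (hm s hs), coe_toL2 (hm t ht)]
    rfl
  exact tendsto_sub_nhds_zero_iff.1 this

lemma hasDerivWithinAt_toL2 {S : Set ℝ} {u u' : ℝ → (Fin d → ℤ) → ℂ}
    (hm : ∀ t ∈ S, w2 0 (u t) < ⊤) (hm' : ∀ t ∈ S, w2 0 (u' t) < ⊤)
    (hc : DerivW 0 S u u') (t : ℝ) (ht : t ∈ S) :
    HasDerivWithinAt (fun t => toL2 (u t)) (toL2 (u' t)) S t := by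
  rw [hasDerivWithinAt_iff_tendsto_slope, ← tendsto_sub_nhds_zero_iff]
  refine tendsto_of_lpn ((hc t ht).congr' ?_)
  filter_upwards [self_mem_nhdsWithin] with s hs
  rw [w2_zero, slope, vsub_eq_sub, lp.coeFn_sub, lp.coeFn_smul, lp.coeFn_sub, coe_toL2 (hm s hs.1),
    coe_toL2 (hm t ht), coe_toL2 (hm' t ht)]
  rfl

/-- The data norm dominates the data of any bounded operator applied to the solution, as soon
as that operator is dominated by the weight `⟨x⟩^k`. -/
lemma data_le {k : ℕ} {t : ℝ} (ht : 0 ≤ t) {V0 V1 : L2 d} {G : ℝ → L2 d}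
    {F : ℝ → (Fin d → ℤ) → ℂ} {f g : (Fin d → ℤ) → ℂ}
    (P : L2 d →L[ℝ] L2 d) (hP : ∀ h : L2 d, lpn 2 (P h : (Fin d → ℤ) → ℂ) ≤ w2 k h)
    (hG : ContinuousOn G (Set.Icc 0 t))
    (hf : (V0 : (Fin d → ℤ) → ℂ) = f) (hg : (V1 : (Fin d → ℤ) → ℂ) = g)
    (hF : ∀ s ∈ Set.Icc 0 t, (G s : (Fin d → ℤ) → ℂ) = F s)
    (hfin : w2 k f + w2 k g + ∫⁻ s in Set.Icc 0 t, w2 k (F s) ≠ ⊤) :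
    ‖P V0‖ + ‖P V1‖ + ∫ s in (0 : ℝ)..t, ‖P (G s)‖ ≤
      (w2 k f + w2 k g + ∫⁻ s in Set.Icc 0 t, w2 k (F s)).toReal := by
  have hI0 : 0 ≤ ∫ s in (0 : ℝ)..t, ‖P (G s)‖ :=
    intervalIntegral.integral_nonneg ht fun _ _ => norm_nonneg _
  have hc : ContinuousOn (fun s => ‖P (G s)‖) (Set.Icc 0 t) :=
    (P.continuous.comp_continuousOn hG).norm
  rw [← ENNReal.ofReal_le_iff_le_toReal hfin, ENNReal.ofReal_add (by positivity) hI0,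
    ENNReal.ofReal_add (norm_nonneg _) (norm_nonneg _)]
  gcongr
  · rw [← lpn_coe, ← hf]; exact hP V0
  · rw [← lpn_coe, ← hg]; exact hP V1
  · rw [intervalIntegral.integral_of_le ht, ← integral_Icc_eq_integral_Ioc,
      ofReal_integral_eq_lintegral_ofReal (hc.integrableOn_compact isCompact_Icc)
        (Eventually.of_forall fun _ => norm_nonneg _)]
    refine setLIntegral_mono' measurableSet_Icc fun s hs => ?_
    rw [← lpn_coe, ← hF s hs]
    exact hP (G s)

end Curves

/-! ### The weighted estimate -/

/-- explicitly time-dependent energy estimate for the inhomogeneous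
linear discrete wave equation `∂ₜ²u - Δu = F`, in `ℓ^{2,k}`, `k ∈ {0,1}`. -/
theorem stmt9 (d : ℕ) (hd : 0 < d) (k : ℕ) (hk : k = 0 ∨ k = 1) :
    ∃ C : ℝ≥0, 0 < C ∧
      ∀ T : ℝ, 0 < T →
        ∀ (u u1 u2 F : ℝ → (Fin d → ℤ) → ℂ) (f g : (Fin d → ℤ) → ℂ),
          IsC2 0 (Set.Icc 0 T) u u1 u2 →
          (∀ t ∈ Set.Icc (0 : ℝ) T, ∀ x, u2 t x - lap (u t) x = F t x) →
          (∀ x, u 0 x = f x) → (∀ x, u1 0 x = g x) →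
          w2 k f < ⊤ → w2 k g < ⊤ →
          (∫⁻ s in Set.Icc (0 : ℝ) T, w2 k (F s)) < ⊤ →
          ∀ t ∈ Set.Icc (0 : ℝ) T,
            w2 k (u t) + w2 k (u1 t) ≤
              (C : ℝ≥0∞) * ENNReal.ofReal (1 + t ^ (k + 1)) *
                (w2 k f + w2 k g + ∫⁻ s in Set.Icc (0 : ℝ) t, w2 k (F s)) := by
  set c : ℝ := 2 * d + 1 with hc
  have hd0 : (0 : ℝ) ≤ d := by positivity
  have hc1 : 1 ≤ c := by linarith
  refine ⟨Real.toNNReal (12 * (d + 1) * c ^ 2), Real.toNNReal_pos.2 (by positivity), ?_⟩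
  intro T _ u u1 u2 F f g hu hwave hf hg hwf hwg hwF t ht
  have hsub : Set.Icc 0 t ⊆ Set.Icc 0 T := Set.Icc_subset_Icc_right ht.2
  have ht0 : 0 ≤ t := ht.1
  have h0 : (0 : ℝ) ∈ Set.Icc 0 T := ⟨le_rfl, ht.1.trans ht.2⟩
  have htt : t ∈ Set.Icc 0 t := ⟨ht0, le_rfl⟩
  set 𝒜 : ℝ≥0∞ := w2 k f + w2 k g + ∫⁻ s in Set.Icc (0 : ℝ) t, w2 k (F s) with h𝒜
  have hfin : 𝒜 ≠ ⊤ := by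
    have hle : ∫⁻ s in Set.Icc (0 : ℝ) t, w2 k (F s) < ⊤ :=
      (lintegral_mono_set hsub).trans_lt hwF
    exact (ENNReal.add_lt_top.2 ⟨ENNReal.add_lt_top.2 ⟨hwf, hwg⟩, hle⟩).ne
  set A : ℝ := 𝒜.toReal with hA
  have hA0 : 0 ≤ A := ENNReal.toReal_nonneg
  set V : ℝ → L2 d := fun t => toL2 (u t) with hVdef
  set V1 : ℝ → L2 d := fun t => toL2 (u1 t) with hV1def
  set V2 : ℝ → L2 d := fun t => toL2 (u2 t) with hV2def
  set G : ℝ → L2 d := fun t => V2 t - lapOp (V t) with hGdef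
  have hV : ∀ s ∈ Set.Icc 0 t, HasDerivWithinAt V (V1 s) (Set.Icc 0 t) s := fun s hs =>
    (hasDerivWithinAt_toL2 hu.mem0 hu.mem1 hu.hder1 s (hsub hs)).mono hsub
  have hV1 : ∀ s ∈ Set.Icc 0 t, HasDerivWithinAt V1 (V2 s) (Set.Icc 0 t) s := fun s hs =>
    (hasDerivWithinAt_toL2 hu.mem1 hu.mem2 hu.hder2 s (hsub hs)).mono hsub
  have hG : ContinuousOn G (Set.Icc 0 t) :=
    ((continuousOn_toL2 hu.mem2 hu.cont2).mono hsub).sub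
      (lapOp.continuous.comp_continuousOn ((continuousOn_toL2 hu.mem0 hu.cont0).mono hsub))
  have heq : ∀ s ∈ Set.Icc 0 t, V2 s = lapOp (V s) + G s := fun s _ => by simp [hGdef]
  have hGF : ∀ s ∈ Set.Icc 0 t, (G s : (Fin d → ℤ) → ℂ) = F s := by
    intro s hs
    ext x
    rw [← hwave s (hsub hs) x]
    change V2 s x - lapOp (V s) x = _
    rw [lapOp_apply, hVdef, hV2def]
    simp only [coe_toL2 (hu.mem0 s (hsub hs)), coe_toL2 (hu.mem2 s (hsub hs))]
  have hVf : (V 0 : (Fin d → ℤ) → ℂ) = f := (coe_toL2 (hu.mem0 0 h0)).trans (funext hf)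
  have hVg : (V1 0 : (Fin d → ℤ) → ℂ) = g := (coe_toL2 (hu.mem1 0 h0)).trans (funext hg)
  have hut : u t = V t := (coe_toL2 (hu.mem0 t ht)).symm
  have hu1t : u1 t = V1 t := (coe_toL2 (hu.mem1 t ht)).symm
  have hdata : ‖V 0‖ + ‖V1 0‖ + ∫ s in (0 : ℝ)..t, ‖G s‖ ≤ A :=
    data_le ht0 (ContinuousLinearMap.id ℝ (L2 d))
      (fun h => (w2_zero _).symm.trans_le (w2_zero_le k h)) hG hVf hVg hGF hfin
  obtain ⟨b1, -, b0⟩ := wave_bound ht0 hV hV1 hG heq hdata htt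
  rw [← hc] at b1 b0
  -- it remains to bound the left-hand side by a real number
  suffices h : ∃ Y0 Y1 : ℝ, 0 ≤ Y0 ∧ 0 ≤ Y1 ∧ w2 k (u t) ≤ ENNReal.ofReal Y0 ∧
      w2 k (u1 t) ≤ ENNReal.ofReal Y1 ∧
      Y0 + Y1 ≤ 12 * (d + 1) * c ^ 2 * (1 + t ^ (k + 1)) * A by
    obtain ⟨Y0, Y1, hY0, hY1, h1, h2, h3⟩ := h
    calc w2 k (u t) + w2 k (u1 t) ≤ ENNReal.ofReal (Y0 + Y1) := by
          rw [ENNReal.ofReal_add hY0 hY1]; gcongr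
      _ ≤ ENNReal.ofReal (12 * (d + 1) * c ^ 2 * (1 + t ^ (k + 1)) * A) :=
          ENNReal.ofReal_le_ofReal h3
      _ = _ := by
          rw [ENNReal.ofReal_mul (by positivity), ENNReal.ofReal_mul (by positivity), hA,
            ENNReal.ofReal_toReal hfin]
          rfl
  have hcc : c ≤ c ^ 2 := by nlinarith
  have hctA : 0 ≤ c * A := by positivity
  rcases hk with rfl | rfl
  · refine ⟨‖V t‖, ‖V1 t‖, norm_nonneg _, norm_nonneg _, ?_, ?_, ?_⟩
    · rw [w2_zero, hut, lpn_coe]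
    · rw [w2_zero, hu1t, lpn_coe]
    · calc ‖V t‖ + ‖V1 t‖ ≤ c * A * (1 + t) + c * A * (1 + t) := by nlinarith
        _ = 2 * (1 * c * (1 + t) * A) := by ring
        _ ≤ 12 * ((d + 1) * c ^ 2 * (1 + t) * A) := by
          gcongr
          · norm_num
          · linarith
        _ = _ := by ring
  · set Z : ℝ := c * (A * (1 + 3 * c * t)) with hZ
    have hZ0 : 0 ≤ Z := by positivity
    have hε₀ : 0 < (1 + t)⁻¹ := by positivity
    have hb : ∀ j : Fin d, ∀ ε (hε : 0 < ε), ε ≤ (1 + t)⁻¹ →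
        ‖sinOp j hε (V1 t)‖ ≤ Z ∧ ‖sinOp j hε (V t)‖ ≤ Z * (1 + t) := by
      intro j ε hε hle
      refine weighted_bound ht0 j hε ?_ hV hV1 hG heq hdata
        (data_le ht0 (sinOp j hε) (lpn_sinOp_le j hε) hG hVf hVg hGF hfin) htt
      rwa [← le_div_iff₀ (by positivity), one_div]
    refine ⟨‖V t‖ + d * (Z * (1 + t)), ‖V1 t‖ + d * Z, by positivity, by positivity, ?_, ?_, ?_⟩
    · rw [hut]
      exact w2_one_le _ (by positivity) hε₀ fun j ε hε hle => (hb j ε hε hle).2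
    · rw [hu1t]
      exact w2_one_le _ hZ0 hε₀ fun j ε hε hle => (hb j ε hε hle).1
    · have e1 : c * A ≤ Z := by
        rw [hZ]
        have : 0 ≤ c * A * (3 * c * t) := by positivity
        linarith
      have e2 : Z ≤ 3 * c ^ 2 * A * (1 + t) := by
        rw [hZ]
        have : 0 ≤ (3 * c ^ 2 - c) * A := mul_nonneg (by nlinarith) hA0
        nlinarith
      have e3 : c * A * (1 + t) ≤ Z * (1 + t) := by gcongr
      calc ‖V t‖ + d * (Z * (1 + t)) + (‖V1 t‖ + d * Z)
          ≤ (d + 1) * (2 + t) * Z := by nlinarith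
        _ ≤ (d + 1) * (2 + t) * (3 * c ^ 2 * A * (1 + t)) := by gcongr
        _ = 3 * (d + 1) * c ^ 2 * A * (2 + 3 * t + t ^ 2) := by ring
        _ ≤ 3 * (d + 1) * c ^ 2 * A * (4 * (1 + t ^ 2)) := by
          gcongr
          nlinarith [sq_nonneg (t - 1)]
        _ = _ := by ring
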